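/- arXiv:2303.12366 — 3 statements merged into one kernel-verified Lean document; each statement's English description precedes it below -/
import Mathlib

section
/- Let i, j, k be natural numbers and let L be a split-invariant ℂ-subspace of ℂ^i × ℂ^j with dim_ℂ L = k, and set d = dim_ℂ(L ∩ (ℂ^i × {0})). Then there exist unitary operators A of ℂ^i and B of ℂ^j (with respect to the standard Hermitian inner products) such that the product map A × B : ℂ^i × ℂ^j → ℂ^i × ℂ^j maps L onto the standard subspace L_d spanned by the standard basis vectors e_1, …, e_d, e_{i+1}, …, e_{i+k−d} of ℂ^{i+j}. -/
theorem aux_std (n : ℕ) (V : Submodule ℂ (EuclideanSpace ℂ (Fin n))) :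
    ∃ A : EuclideanSpace ℂ (Fin n) ≃ₗᵢ[ℂ] EuclideanSpace ℂ (Fin n),
      Submodule.map A.toLinearEquiv.toLinearMap V = Submodule.span ℂ
        {v : EuclideanSpace ℂ (Fin n) | ∃ a : Fin n, a.val < Module.finrank ℂ V ∧
          v = EuclideanSpace.single a 1} := by
  have hle : Module.finrank ℂ V ≤ n := by
    simpa using Submodule.finrank_le V
  let c := stdOrthonormalBasis ℂ V
  let v : Fin n → EuclideanSpace ℂ (Fin n) := fun a =>
    if h : a.val < Module.finrank ℂ V then (c ⟨a, h⟩ : EuclideanSpace ℂ (Fin n)) else 0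
  let s : Set (Fin n) := {a | a.val < Module.finrank ℂ V}
  have hc : Orthonormal ℂ (fun a => (c a : EuclideanSpace ℂ (Fin n))) :=
    c.orthonormal.comp_linearIsometry V.subtypeₗᵢ
  have hv : Orthonormal ℂ (s.domRestrict v) := by
    have h2 := hc.comp (fun a : s => (⟨a.1.1, a.2⟩ : Fin (Module.finrank ℂ V)))
      (fun a b hab => Subtype.ext (Fin.ext (by simpa using hab)))
    convert h2 using 1
    funext a
    have ha : a.1.1 < Module.finrank ℂ V := a.2
    simp [v, Set.domRestrict, ha]
  obtain ⟨b, hb⟩ := hv.exists_orthonormalBasis_extension_of_card_eq (by simp)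
  have hb2 : ∀ (a : Fin n) (h : a.val < Module.finrank ℂ V), b a = c ⟨a, h⟩ := by
    intro a h
    rw [hb a h]
    simp [v, h]
  have hV : V = Submodule.span ℂ (Set.range (fun a => (c a : EuclideanSpace ℂ (Fin n)))) := by
    have h1 := c.toBasis.span_eq
    have h2 := congrArg (Submodule.map V.subtype) h1
    rw [Submodule.map_span, ← Set.range_comp, Submodule.map_top, Submodule.range_subtype] at h2
    refine h2.symm.trans ?_
    congr 2
    all_goals first | rfl | (funext a; simp)
  refine ⟨b.repr, ?_⟩
  have key : Submodule.map b.repr.toLinearEquiv.toLinearMap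
      (Submodule.span ℂ (Set.range (fun a => (c a : EuclideanSpace ℂ (Fin n))))) =
      Submodule.span ℂ
        {v : EuclideanSpace ℂ (Fin n) | ∃ a : Fin n, a.val < Module.finrank ℂ V ∧
          v = EuclideanSpace.single a 1} := by
    rw [Submodule.map_span]
    congr 1
    ext w
    constructor
    · rintro ⟨_, ⟨a, rfl⟩, rfl⟩
      refine ⟨⟨a, a.2.trans_le hle⟩, a.2, ?_⟩
      have := hb2 ⟨a, a.2.trans_le hle⟩ a.2
      simp only [Fin.eta] at this
      simp [← this]
    · rintro ⟨a, ha, rfl⟩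
      refine ⟨_, ⟨⟨a, ha⟩, rfl⟩, ?_⟩
      simp [← hb2 a ha]
  rw [← key, ← hV]

theorem aux_finrank (i j : ℕ) (V : Submodule ℂ (EuclideanSpace ℂ (Fin i)))
    (W : Submodule ℂ (EuclideanSpace ℂ (Fin j))) :
    Module.finrank ℂ (V.prod W) = Module.finrank ℂ V + Module.finrank ℂ W := by
  let e : (V.prod W) ≃ₗ[ℂ] (V × W) :=
    { toFun := fun p => (⟨p.1.1, p.2.1⟩, ⟨p.1.2, p.2.2⟩)
      invFun := fun p => ⟨(p.1.1, p.2.1), ⟨p.1.2, p.2.2⟩⟩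
      map_add' := fun _ _ => rfl
      map_smul' := fun _ _ => rfl
      left_inv := fun _ => rfl
      right_inv := fun _ => rfl }
  rw [e.finrank_eq, Module.finrank_prod]

/-- A split-invariant `k`-dimensional ℂ-subspace `L` of `ℂ^i × ℂ^j` with
`d = dim (L ∩ (ℂ^i × 0))` can be moved, by a product `A × B` of unitary operators of the
two factors, onto the standard subspace `L_d` spanned by the standard basis vectors
`e_1, …, e_d` of `ℂ^i` (included in the first factor) and `e_1, …, e_{k-d}` of `ℂ^j`
(included in the second factor), i.e. by `e_1, …, e_d, e_{i+1}, …, e_{i+k-d}` of `ℂ^{i+j}`. -/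
theorem split_invariant_normal_form (i j k : ℕ)
    (L : Submodule ℂ (EuclideanSpace ℂ (Fin i) × EuclideanSpace ℂ (Fin j)))
    (hsplit : ∀ (x : EuclideanSpace ℂ (Fin i)) (y : EuclideanSpace ℂ (Fin j)),
        (x, y) ∈ L → (-x, y) ∈ L)
    (hdim : Module.finrank ℂ L = k)
    (d : ℕ)
    (hd : d = Module.finrank ℂ
        (L ⊓ Submodule.prod (⊤ : Submodule ℂ (EuclideanSpace ℂ (Fin i)))
            (⊥ : Submodule ℂ (EuclideanSpace ℂ (Fin j))) :
          Submodule ℂ (EuclideanSpace ℂ (Fin i) × EuclideanSpace ℂ (Fin j)))) :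
    ∃ (A : EuclideanSpace ℂ (Fin i) ≃ₗᵢ[ℂ] EuclideanSpace ℂ (Fin i))
      (B : EuclideanSpace ℂ (Fin j) ≃ₗᵢ[ℂ] EuclideanSpace ℂ (Fin j)),
      Submodule.map
          (LinearMap.prodMap A.toLinearEquiv.toLinearMap B.toLinearEquiv.toLinearMap) L =
        Submodule.prod
          (Submodule.span ℂ
            {v : EuclideanSpace ℂ (Fin i) | ∃ a : Fin i, a.val < d ∧ v = EuclideanSpace.single a 1})
          (Submodule.span ℂ
            {v : EuclideanSpace ℂ (Fin j) | ∃ b : Fin j, b.val < k - d ∧ v = EuclideanSpace.single b 1}) := by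
  have hfst : ∀ x y, (x, y) ∈ L → (x, (0 : EuclideanSpace ℂ (Fin j))) ∈ L := by
    intro x y h
    have h1 := L.smul_mem (2⁻¹ : ℂ) (L.sub_mem h (hsplit x y h))
    have h2 : (2⁻¹ : ℂ) • ((x, y) - (-x, y)) = (x, (0 : EuclideanSpace ℂ (Fin j))) := by
      ext a <;> simp
      ring
    rwa [h2] at h1
  obtain ⟨V, W, rfl⟩ : ∃ V W, L = Submodule.prod V W := by
    refine ⟨L.comap (LinearMap.inl ℂ _ _), L.comap (LinearMap.inr ℂ _ _), ?_⟩
    ext ⟨x, y⟩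
    simp only [Submodule.mem_prod, Submodule.mem_comap, LinearMap.inl_apply, LinearMap.inr_apply]
    constructor
    · intro h
      refine ⟨hfst x y h, ?_⟩
      simpa using L.sub_mem h (hfst x y h)
    · rintro ⟨h1, h2⟩
      simpa using L.add_mem h1 h2
  rw [Submodule.prod_inf_prod, inf_top_eq, inf_bot_eq, aux_finrank, finrank_bot, add_zero] at hd
  rw [aux_finrank] at hdim
  obtain ⟨A, hA⟩ := aux_std i V
  obtain ⟨B, hB⟩ := aux_std j W
  refine ⟨A, B, ?_⟩
  have hk : k - d = Module.finrank ℂ W := by omega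
  rw [hk, hd, ← hA, ← hB]
  ext ⟨x, y⟩
  constructor
  · rintro ⟨⟨u, w⟩, ⟨hu, hw⟩, h⟩
    rw [← h]
    exact ⟨⟨u, hu, rfl⟩, ⟨w, hw, rfl⟩⟩
  · rintro ⟨⟨u, hu, h1⟩, ⟨w, hw, h2⟩⟩
    exact ⟨(u, w), ⟨hu, hw⟩, Prod.ext h1 h2⟩
end

section
/- Let i, j, k be natural numbers and let L and L′ be split-invariant ℂ-subspaces of ℂ^i × ℂ^j, both of dimension k. Then there exist unitary operators A of ℂ^i and B of ℂ^j with (A × B)(L) = L′ if and only if dim_ℂ(L ∩ (ℂ^i × {0})) = dim_ℂ(L′ ∩ (ℂ^i × {0})). -/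
theorem aux_split {V W : Type*} [AddCommGroup V] [Module ℂ V] [AddCommGroup W] [Module ℂ W]
    (L : Submodule ℂ (V × W)) (h : ∀ (x : V) (y : W), (x, y) ∈ L → (-x, y) ∈ L) :
    ∃ (P : Submodule ℂ V) (Q : Submodule ℂ W), L = P.prod Q := by
  refine ⟨L.comap (LinearMap.inl ℂ V W), L.comap (LinearMap.inr ℂ V W), ?_⟩
  ext ⟨x, y⟩
  simp only [Submodule.mem_prod, Submodule.mem_comap, LinearMap.inl_apply, LinearMap.inr_apply]
  constructor
  · intro hxy
    have h2 := h x y hxy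
    constructor
    · have := L.smul_mem (2⁻¹ : ℂ) (L.sub_mem hxy h2)
      simpa [← two_smul ℂ x, smul_smul] using this
    · have := L.smul_mem (2⁻¹ : ℂ) (L.add_mem hxy h2)
      simpa [← two_smul ℂ y, smul_smul] using this
  · rintro ⟨h1, h2⟩
    simpa using L.add_mem h1 h2

theorem aux_finrank_s3 {V W : Type*} [AddCommGroup V] [Module ℂ V] [AddCommGroup W] [Module ℂ W]
    [FiniteDimensional ℂ V] [FiniteDimensional ℂ W]
    (P : Submodule ℂ V) (Q : Submodule ℂ W) :
    Module.finrank ℂ (P.prod Q) = Module.finrank ℂ P + Module.finrank ℂ Q := by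
  have e : P.prod Q = LinearMap.range (P.subtype.prodMap Q.subtype) := by
    rw [LinearMap.range_prodMap, Submodule.range_subtype, Submodule.range_subtype]
  rw [e, LinearMap.finrank_range_of_inj, Module.finrank_prod]
  exact Function.Injective.prodMap P.injective_subtype Q.injective_subtype

theorem aux_unitary {V : Type*} [NormedAddCommGroup V] [InnerProductSpace ℂ V]
    [FiniteDimensional ℂ V] (P P' : Submodule ℂ V)
    (h : Module.finrank ℂ P = Module.finrank ℂ P') :
    ∃ A : V ≃ₗᵢ[ℂ] V, P.map A.toLinearEquiv.toLinearMap = P' := by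
  let e : P ≃ₗᵢ[ℂ] P' := (stdOrthonormalBasis ℂ P).equiv (stdOrthonormalBasis ℂ P') (finCongr h)
  let f : P →ₗᵢ[ℂ] V := P'.subtypeₗᵢ.comp e.toLinearIsometry
  refine ⟨f.extend.toLinearIsometryEquiv rfl, ?_⟩
  have key : ∀ x : P, (f.extend.toLinearIsometryEquiv rfl) (x : V) = (e x : V) := by
    intro x
    rw [LinearIsometry.toLinearIsometryEquiv_apply, LinearIsometry.extend_apply]
    rfl
  ext y
  constructor
  · rintro ⟨x, hx, rfl⟩
    have := key ⟨x, hx⟩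
    exact this ▸ (e ⟨x, hx⟩).2
  · intro hy
    refine ⟨e.symm ⟨y, hy⟩, (e.symm ⟨y, hy⟩).2, ?_⟩
    have := key (e.symm ⟨y, hy⟩)
    rw [LinearIsometryEquiv.apply_symm_apply] at this
    exact this

/-- Two split-invariant ℂ-subspaces `L`, `L'` of `ℂ^i × ℂ^j`, both of
dimension `k`, lie in the same orbit of `U(i) × U(j)` (acting by products `A × B` of
unitary operators of the factors) if and only if
`dim (L ∩ (ℂ^i × 0)) = dim (L' ∩ (ℂ^i × 0))`. -/
theorem split_invariant_orbit_iff (i j k : ℕ)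
    (L L' : Submodule ℂ (EuclideanSpace ℂ (Fin i) × EuclideanSpace ℂ (Fin j)))
    (hsplit : ∀ (x : EuclideanSpace ℂ (Fin i)) (y : EuclideanSpace ℂ (Fin j)),
        (x, y) ∈ L → (-x, y) ∈ L)
    (hsplit' : ∀ (x : EuclideanSpace ℂ (Fin i)) (y : EuclideanSpace ℂ (Fin j)),
        (x, y) ∈ L' → (-x, y) ∈ L')
    (hdim : Module.finrank ℂ L = k) (hdim' : Module.finrank ℂ L' = k) :
    (∃ (A : EuclideanSpace ℂ (Fin i) ≃ₗᵢ[ℂ] EuclideanSpace ℂ (Fin i))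
       (B : EuclideanSpace ℂ (Fin j) ≃ₗᵢ[ℂ] EuclideanSpace ℂ (Fin j)),
        Submodule.map
            (LinearMap.prodMap A.toLinearEquiv.toLinearMap B.toLinearEquiv.toLinearMap) L = L') ↔
      Module.finrank ℂ
          (L ⊓ Submodule.prod (⊤ : Submodule ℂ (EuclideanSpace ℂ (Fin i)))
              (⊥ : Submodule ℂ (EuclideanSpace ℂ (Fin j))) :
            Submodule ℂ (EuclideanSpace ℂ (Fin i) × EuclideanSpace ℂ (Fin j))) =
        Module.finrank ℂ
          (L' ⊓ Submodule.prod (⊤ : Submodule ℂ (EuclideanSpace ℂ (Fin i)))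
              (⊥ : Submodule ℂ (EuclideanSpace ℂ (Fin j))) :
            Submodule ℂ (EuclideanSpace ℂ (Fin i) × EuclideanSpace ℂ (Fin j))) := by
  obtain ⟨P, Q, rfl⟩ := aux_split L hsplit
  obtain ⟨P', Q', rfl⟩ := aux_split L' hsplit'
  rw [aux_finrank_s3] at hdim hdim'
  rw [Submodule.prod_inf_prod, Submodule.prod_inf_prod, inf_top_eq, inf_top_eq, inf_bot_eq,
    inf_bot_eq, aux_finrank_s3, aux_finrank_s3, finrank_bot, add_zero, add_zero]
  constructor
  · rintro ⟨A, B, h⟩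
    rw [LinearMap.prodMap_map_prod] at h
    have h1 := congrArg (Submodule.map (LinearMap.fst ℂ _ _)) h
    rw [Submodule.prod_map_fst, Submodule.prod_map_fst] at h1
    rw [← h1]
    exact (LinearEquiv.finrank_map_eq A.toLinearEquiv P).symm
  · intro h
    obtain ⟨A, hA⟩ := aux_unitary P P' h
    obtain ⟨B, hB⟩ := aux_unitary Q Q' (by omega)
    exact ⟨A, B, by rw [LinearMap.prodMap_map_prod, hA, hB]⟩
end

section
/- Let i, j, k, d be natural numbers with d ≤ i, d ≤ k and k − d ≤ j, and set m = i + j. Let F be the ℂ-span of the standard basis vectors e_1, …, e_i of ℂ^m and let L_d be the ℂ-span of e_1, …, e_d, e_{i+1}, …, e_{i+k−d}. A unitary operator g of ℂ^m satisfies g(F) = F and g(L_d) = L_d if and only if g maps each of the four coordinate subspaces span(e_1, …, e_d), span(e_{d+1}, …, e_i), span(e_{i+1}, …, e_{i+k−d}) and span(e_{i+k−d+1}, …, e_m) onto itself. -/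
def CoordSp {n : ℕ} (P : Fin n → Prop) : Submodule ℂ (EuclideanSpace ℂ (Fin n)) :=
  Submodule.span ℂ {v : EuclideanSpace ℂ (Fin n) |
    ∃ a : Fin n, P a ∧ v = EuclideanSpace.single a 1}

theorem mem_CoordSp {n : ℕ} (P : Fin n → Prop) (v : EuclideanSpace ℂ (Fin n)) :
    v ∈ CoordSp P ↔ ∀ a, ¬ P a → v a = 0 := by
  constructor
  · intro h
    induction h using Submodule.span_induction with
    | mem x hx =>
      obtain ⟨b, hb, rfl⟩ := hx
      intro a ha
      have : a ≠ b := by rintro rfl; exact ha hb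
      simp [this]
    | zero => intro a _; simp
    | add x y _ _ hx hy => intro a ha; simp [hx a ha, hy a ha]
    | smul c x _ hx => intro a ha; simp [hx a ha]
  · intro h
    have hv : v = ∑ a, v a • (EuclideanSpace.single a (1 : ℂ) : EuclideanSpace ℂ (Fin n)) := by
      ext b
      simp [Finset.sum_apply, Pi.single_apply]
    rw [hv]
    refine Submodule.sum_mem _ fun a _ => ?_
    by_cases hp : P a
    · exact Submodule.smul_mem _ _ (Submodule.subset_span ⟨a, hp, rfl⟩)
    · rw [h a hp, zero_smul]; exact Submodule.zero_mem _

def CStab {n : ℕ} (g : EuclideanSpace ℂ (Fin n) ≃ₗᵢ[ℂ] EuclideanSpace ℂ (Fin n))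
    (P : Fin n → Prop) : Prop :=
  Submodule.map g.toLinearEquiv.toLinearMap (CoordSp P) = CoordSp P

theorem CStab_iff {n : ℕ} (g : EuclideanSpace ℂ (Fin n) ≃ₗᵢ[ℂ] EuclideanSpace ℂ (Fin n))
    (P : Fin n → Prop) : CStab g P ↔ ∀ v, g v ∈ CoordSp P ↔ v ∈ CoordSp P := by
  unfold CStab
  constructor
  · intro h v
    constructor
    · intro hv
      rw [← h] at hv
      obtain ⟨w, hw, hwv⟩ := hv
      have : w = v := g.injective hwv
      exact this ▸ hw
    · intro hv
      rw [← h]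
      exact ⟨v, hv, rfl⟩
  · intro h
    ext v
    constructor
    · rintro ⟨w, hw, rfl⟩
      exact (h w).2 hw
    · intro hv
      refine ⟨g.symm v, ?_, g.apply_symm_apply v⟩
      exact (h _).1 (by rwa [g.apply_symm_apply])

theorem CStab.congr {n : ℕ} {g : EuclideanSpace ℂ (Fin n) ≃ₗᵢ[ℂ] EuclideanSpace ℂ (Fin n)}
    {P Q : Fin n → Prop} (h : CStab g P) (hpq : ∀ a, P a ↔ Q a) : CStab g Q := by
  have : P = Q := funext fun a => propext (hpq a)
  exact this ▸ h

theorem CStab.inter {n : ℕ} {g : EuclideanSpace ℂ (Fin n) ≃ₗᵢ[ℂ] EuclideanSpace ℂ (Fin n)}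
    {P Q : Fin n → Prop} (hP : CStab g P) (hQ : CStab g Q) : CStab g (fun a => P a ∧ Q a) := by
  have key : ∀ v, v ∈ CoordSp (fun a => P a ∧ Q a) ↔ v ∈ CoordSp P ∧ v ∈ CoordSp Q := by
    intro v
    simp only [mem_CoordSp]
    constructor
    · intro h
      exact ⟨fun a ha => h a (fun x => ha x.1), fun a ha => h a (fun x => ha x.2)⟩
    · rintro ⟨h1, h2⟩ a ha
      by_cases hp : P a
      · exact h2 a (fun hq => ha ⟨hp, hq⟩)
      · exact h1 a hp
  rw [CStab_iff] at *
  intro v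
  rw [key, key, hP, hQ]

theorem CStab.compl {n : ℕ} {g : EuclideanSpace ℂ (Fin n) ≃ₗᵢ[ℂ] EuclideanSpace ℂ (Fin n)}
    {P : Fin n → Prop} (hP : CStab g P) : CStab g (fun a => ¬ P a) := by
  have key : ∀ v, v ∈ CoordSp (fun a => ¬ P a) ↔ ∀ w ∈ CoordSp P, inner ℂ w v = 0 := by
    intro v
    constructor
    · intro h w hw
      rw [mem_CoordSp] at h hw
      rw [PiLp.inner_apply]
      refine Finset.sum_eq_zero fun a _ => ?_
      by_cases hp : P a
      · rw [h a (not_not.2 hp), inner_zero_right]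
      · rw [hw a hp, inner_zero_left]
    · intro h
      rw [mem_CoordSp]
      intro a ha
      have := h (EuclideanSpace.single a 1) (Submodule.subset_span ⟨a, not_not.1 ha, rfl⟩)
      simpa [EuclideanSpace.inner_single_left] using this
  rw [CStab_iff] at *
  intro v
  rw [key, key]
  constructor
  · intro h w hw
    have := h (g w) ((hP w).2 hw)
    rwa [g.inner_map_map] at this
  · intro h w hw
    have := h (g.symm w) ((hP _).1 (by rwa [g.apply_symm_apply]))
    rw [← g.inner_map_map, g.apply_symm_apply] at this
    exact this

/-- Let `m = i + j`, `F` the span of the first `i` standard basis vectors of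
`ℂ^m`, and `L_d` the span of `e_1, …, e_d, e_{i+1}, …, e_{i+k-d}` (where `d ≤ i`, `d ≤ k`,
`k - d ≤ j`). A unitary operator `g` of `ℂ^m` satisfies `g(F) = F` and `g(L_d) = L_d` if
and only if `g` maps each of the four coordinate subspaces `span(e_1, …, e_d)`,
`span(e_{d+1}, …, e_i)`, `span(e_{i+1}, …, e_{i+k-d})` and `span(e_{i+k-d+1}, …, e_m)`
onto itself. -/
theorem stabilizer_of_flag_is_block_subgroup (i j k d : ℕ)
    (hdi : d ≤ i) (hdk : d ≤ k) (hkd : k - d ≤ j)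
    (g : EuclideanSpace ℂ (Fin (i + j)) ≃ₗᵢ[ℂ] EuclideanSpace ℂ (Fin (i + j))) :
    (Submodule.map g.toLinearEquiv.toLinearMap
          (Submodule.span ℂ {v : EuclideanSpace ℂ (Fin (i + j)) |
            ∃ a : Fin (i + j), a.val < i ∧ v = EuclideanSpace.single a 1}) =
        Submodule.span ℂ {v : EuclideanSpace ℂ (Fin (i + j)) |
            ∃ a : Fin (i + j), a.val < i ∧ v = EuclideanSpace.single a 1} ∧
      Submodule.map g.toLinearEquiv.toLinearMap
          (Submodule.span ℂ {v : EuclideanSpace ℂ (Fin (i + j)) |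
            ∃ a : Fin (i + j), (a.val < d ∨ (i ≤ a.val ∧ a.val < i + (k - d))) ∧
              v = EuclideanSpace.single a 1}) =
        Submodule.span ℂ {v : EuclideanSpace ℂ (Fin (i + j)) |
            ∃ a : Fin (i + j), (a.val < d ∨ (i ≤ a.val ∧ a.val < i + (k - d))) ∧
              v = EuclideanSpace.single a 1}) ↔
    (Submodule.map g.toLinearEquiv.toLinearMap
          (Submodule.span ℂ {v : EuclideanSpace ℂ (Fin (i + j)) |
            ∃ a : Fin (i + j), a.val < d ∧ v = EuclideanSpace.single a 1}) =
        Submodule.span ℂ {v : EuclideanSpace ℂ (Fin (i + j)) |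
            ∃ a : Fin (i + j), a.val < d ∧ v = EuclideanSpace.single a 1} ∧
      Submodule.map g.toLinearEquiv.toLinearMap
          (Submodule.span ℂ {v : EuclideanSpace ℂ (Fin (i + j)) |
            ∃ a : Fin (i + j), (d ≤ a.val ∧ a.val < i) ∧ v = EuclideanSpace.single a 1}) =
        Submodule.span ℂ {v : EuclideanSpace ℂ (Fin (i + j)) |
            ∃ a : Fin (i + j), (d ≤ a.val ∧ a.val < i) ∧ v = EuclideanSpace.single a 1} ∧
      Submodule.map g.toLinearEquiv.toLinearMap
          (Submodule.span ℂ {v : EuclideanSpace ℂ (Fin (i + j)) |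
            ∃ a : Fin (i + j), (i ≤ a.val ∧ a.val < i + (k - d)) ∧
              v = EuclideanSpace.single a 1}) =
        Submodule.span ℂ {v : EuclideanSpace ℂ (Fin (i + j)) |
            ∃ a : Fin (i + j), (i ≤ a.val ∧ a.val < i + (k - d)) ∧
              v = EuclideanSpace.single a 1} ∧
      Submodule.map g.toLinearEquiv.toLinearMap
          (Submodule.span ℂ {v : EuclideanSpace ℂ (Fin (i + j)) |
            ∃ a : Fin (i + j), i + (k - d) ≤ a.val ∧ v = EuclideanSpace.single a 1}) =
        Submodule.span ℂ {v : EuclideanSpace ℂ (Fin (i + j)) |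
            ∃ a : Fin (i + j), i + (k - d) ≤ a.val ∧ v = EuclideanSpace.single a 1}) := by
  change (CStab g (fun a => a.val < i) ∧
      CStab g (fun a => a.val < d ∨ (i ≤ a.val ∧ a.val < i + (k - d)))) ↔
    (CStab g (fun a => a.val < d) ∧ CStab g (fun a => d ≤ a.val ∧ a.val < i) ∧
      CStab g (fun a => i ≤ a.val ∧ a.val < i + (k - d)) ∧
      CStab g (fun a => i + (k - d) ≤ a.val))
  constructor
  · rintro ⟨hF, hL⟩
    refine ⟨(hF.inter hL).congr ?_, (hF.inter hL.compl).congr ?_,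
      (hF.compl.inter hL).congr ?_, (hF.compl.inter hL.compl).congr ?_⟩ <;>
    · intro a
      omega
  · rintro ⟨h1, h2, h3, h4⟩
    refine ⟨(h1.compl.inter h2.compl).compl.congr ?_, (h1.compl.inter h3.compl).compl.congr ?_⟩ <;>
    · intro a
      omega
end
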